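/- arXiv:2211.02695 — 2 statements merged into one kernel-verified Lean document; each statement's English description precedes it below -/
import Mathlib

section
/- Let J ≥ 0 and let X be a real 2^J × 2^J matrix. Define the recursive Haar approximation sequence by 𝒜_0 = X and 𝒜_{k+1} = H_{(2^{J-k-1})} · 𝒜_k · H_{(2^{J-k-1})}^T for 0 ≤ k < J, where H_{(n)} denotes the n × 2n Haar averaging matrix. Then 𝒜_J is a 1 × 1 matrix whose unique entry equals 2^J · GAP(X). In particular, the J = log₂(2^J)-level approximation component of the 2D discrete Haar wavelet transform of X is proportional to the global average pooling of X, with proportionality constant 2^J. -/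
open Matrix BigOperators

/-- Global average pooling of a real matrix. -/
noncomputable def GAP {m n : ℕ} (X : Matrix (Fin m) (Fin n) ℝ) : ℝ :=
  (∑ i, ∑ j, X i j) / (m * n)

/-- The Haar averaging matrix `H_(n) ∈ ℝ^{n×2n}`:
`H i (2i) = H i (2i+1) = 1/√2` and `0` otherwise (0-based indices). -/
noncomputable def haarH (n : ℕ) : Matrix (Fin n) (Fin (2 * n)) ℝ :=
  fun i j => if (j : ℕ) = 2 * i ∨ (j : ℕ) = 2 * i + 1 then 1 / Real.sqrt 2 else 0

theorem haarH_col_sum (n : ℕ) (j : Fin (2 * n)) : ∑ i, haarH n i j = 1 / Real.sqrt 2 := by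
  have hj := j.2
  rw [Finset.sum_eq_single (⟨(j : ℕ) / 2, by omega⟩ : Fin n)]
  · unfold haarH
    rw [if_pos]
    simp only
    omega
  · intro b _ hb
    unfold haarH
    rw [if_neg]
    intro h
    apply hb
    ext
    simp only
    omega
  · simp

theorem haar_sum (n : ℕ) (B : Matrix (Fin (2 * n)) (Fin (2 * n)) ℝ) :
    ∑ i, ∑ j, (haarH n * B * (haarH n)ᵀ) i j = (∑ i, ∑ j, B i j) / 2 := by
  have h2 : (1 / Real.sqrt 2) * (1 / Real.sqrt 2) = 1 / 2 := by
    rw [div_mul_div_comm, Real.mul_self_sqrt (by norm_num)]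
    norm_num
  have h1 : ∀ i, ∑ j, (haarH n * B * (haarH n)ᵀ) i j
      = ∑ l, (haarH n * B) i l * (1 / Real.sqrt 2) := by
    intro i
    simp only [Matrix.mul_apply (M := haarH n * B), Matrix.transpose_apply]
    rw [Finset.sum_comm]
    refine Finset.sum_congr rfl fun l _ => ?_
    rw [← Finset.mul_sum, haarH_col_sum]
  have h3 : ∀ l, ∑ i, (haarH n * B) i l = ∑ k, (1 / Real.sqrt 2) * B k l := by
    intro l
    simp only [Matrix.mul_apply]
    rw [Finset.sum_comm]
    refine Finset.sum_congr rfl fun k _ => ?_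
    rw [← Finset.sum_mul, haarH_col_sum]
  simp only [h1]
  rw [Finset.sum_comm]
  simp only [← Finset.sum_mul, h3, ← Finset.mul_sum]
  rw [Finset.sum_comm, mul_right_comm, h2]
  ring

theorem reindex_sum {m n : ℕ} (h : m = n) (B : Matrix (Fin m) (Fin m) ℝ) :
    ∑ i, ∑ j, (Matrix.reindex (finCongr h) (finCongr h) B) i j = ∑ i, ∑ j, B i j := by
  subst h
  rfl

/-- The recursive Haar approximation sequence `𝒜_0 = X`,
`𝒜_{k+1} = H_(2^{J-k-1}) · 𝒜_k · H_(2^{J-k-1})ᵀ` terminates in a `1 × 1` matrix whose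
unique entry is `2^J · GAP(X)`. -/
theorem recursive_haar_approx_eq_GAP (J : ℕ) (X : Matrix (Fin (2 ^ J)) (Fin (2 ^ J)) ℝ)
    (A : ∀ k : ℕ, Matrix (Fin (2 ^ (J - k))) (Fin (2 ^ (J - k))) ℝ)
    (hA0 : A 0 = X)
    (hrec : ∀ (k : ℕ) (hk : k < J),
      A (k + 1) =
        haarH (2 ^ (J - (k + 1))) *
          (Matrix.reindex
            (finCongr (by rw [show J - k = J - (k + 1) + 1 by omega, pow_succ, Nat.mul_comm] :
              2 ^ (J - k) = 2 * 2 ^ (J - (k + 1))))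
            (finCongr (by rw [show J - k = J - (k + 1) + 1 by omega, pow_succ, Nat.mul_comm] :
              2 ^ (J - k) = 2 * 2 ^ (J - (k + 1))))
            (A k)) *
          (haarH (2 ^ (J - (k + 1))))ᵀ) :
    2 ^ (J - J) = 1 ∧ ∀ i j : Fin (2 ^ (J - J)), A J i j = 2 ^ J * GAP X := by
  have key : ∀ k, k ≤ J → (∑ i, ∑ j, A k i j) * 2 ^ k = ∑ i, ∑ j, X i j := by
    intro k
    induction k with
    | zero => intro _; rw [pow_zero, mul_one, hA0]; rfl
    | succ k ih =>
      intro hk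
      rw [hrec k hk, haar_sum, reindex_sum, ← ih (by omega)]
      ring
  have h1 : 2 ^ (J - J) = 1 := by simp
  refine ⟨h1, fun i j => ?_⟩
  have hs : Subsingleton (Fin (2 ^ (J - J))) := by rw [h1]; infer_instance
  have hk := key J le_rfl
  rw [Fintype.sum_subsingleton _ i, Fintype.sum_subsingleton _ j] at hk
  unfold GAP
  rw [← hk]
  push_cast
  field_simp
end

section
/- Let X be a real H × W matrix with H, W ≥ 1, and define the sequence of matrices A_0 = X and A_{k+1} = T(P(A_k)), where P pads a matrix to even height and width by appending rows and columns whose new entries all equal the GAP of that matrix (P is the identity if both dimensions are already even), and T is the 2×2 block-averaging map. Then GAP(A_k) = GAP(X) for every k ≥ 0, and for every k ≥ ⌈log₂(max(H,W))⌉ the matrix A_k is 1 × 1 with unique entry GAP(X). -/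
open Matrix BigOperators

/-- The 2×2 block-averaging map `T`. -/
noncomputable def blockAvg {m n : ℕ} (A : Matrix (Fin (2 * m)) (Fin (2 * n)) ℝ) :
    Matrix (Fin m) (Fin n) ℝ :=
  fun i j =>
    (A ⟨2 * i, by have := i.isLt; omega⟩ ⟨2 * j, by have := j.isLt; omega⟩ +
     A ⟨2 * i + 1, by have := i.isLt; omega⟩ ⟨2 * j, by have := j.isLt; omega⟩ +
     A ⟨2 * i, by have := i.isLt; omega⟩ ⟨2 * j + 1, by have := j.isLt; omega⟩ +
     A ⟨2 * i + 1, by have := i.isLt; omega⟩ ⟨2 * j + 1, by have := j.isLt; omega⟩) / 4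

/-- The padding map `P`: pads an `m × n` matrix to size `2⌈m/2⌉ × 2⌈n/2⌉`, filling all
appended entries with the GAP of the matrix.  (If both dimensions are already even, this
is the identity.) -/
noncomputable def padGAP {m n : ℕ} (B : Matrix (Fin m) (Fin n) ℝ) :
    Matrix (Fin (2 * ((m + 1) / 2))) (Fin (2 * ((n + 1) / 2))) ℝ :=
  fun i j => if h : (i : ℕ) < m ∧ (j : ℕ) < n then B ⟨i, h.1⟩ ⟨j, h.2⟩ else GAP B

/-- Dimension sequence: `d_0 = d`, `d_{k+1} = ⌈d_k / 2⌉`. -/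
def dimSeq (d : ℕ) : ℕ → ℕ
  | 0 => d
  | k + 1 => (dimSeq d k + 1) / 2

/-- The sequence `A_0 = X`, `A_{k+1} = T(P(A_k))`. -/
noncomputable def seqTP {H W : ℕ} (X : Matrix (Fin H) (Fin W) ℝ) :
    ∀ k : ℕ, Matrix (Fin (dimSeq H k)) (Fin (dimSeq W k)) ℝ
  | 0 => X
  | k + 1 => blockAvg (padGAP (seqTP X k))

theorem gapAux_range_two (m : ℕ) (f : ℕ → ℝ) :
    ∑ i ∈ Finset.range (2 * m), f i = ∑ i ∈ Finset.range m, (f (2 * i) + f (2 * i + 1)) := by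
  induction m with
  | zero => simp
  | succ k ih =>
    rw [show 2 * (k + 1) = 2 * k + 1 + 1 by ring, Finset.sum_range_succ, Finset.sum_range_succ,
      Finset.sum_range_succ, ih]
    ring

theorem gapAux_step {m n : ℕ} (hm : 1 ≤ m) (hn : 1 ≤ n) (B : Matrix (Fin m) (Fin n) ℝ) :
    GAP (blockAvg (padGAP B)) = GAP B := by
  obtain ⟨g, hg⟩ : ∃ g, g = GAP B := ⟨_, rfl⟩
  obtain ⟨F, hF⟩ : ∃ F : ℕ → ℕ → ℝ, F = fun i j =>
    if h : i < m ∧ j < n then B ⟨i, h.1⟩ ⟨j, h.2⟩ - g else 0 := ⟨_, rfl⟩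
  have hm0 : (m : ℝ) ≠ 0 := by positivity
  have hn0 : (n : ℝ) ≠ 0 := by positivity
  have h0 : ∑ i ∈ Finset.range m, ∑ j ∈ Finset.range n, F i j = 0 := by
    rw [Finset.sum_range]
    simp_rw [Finset.sum_range]
    have : ∀ (i : Fin m) (j : Fin n), F i j = B i j - g := by
      intro i j; simp [hF]
    simp_rw [this, Finset.sum_sub_distrib]
    simp only [Finset.sum_const, Finset.card_univ, Fintype.card_fin, nsmul_eq_mul]
    rw [hg, GAP]
    field_simp
    ring
  have h1 : ∑ i ∈ Finset.range (2 * ((m + 1) / 2)),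
      ∑ j ∈ Finset.range (2 * ((n + 1) / 2)), F i j = 0 := by
    rw [← h0]
    symm
    have hj : ∀ i, ∑ j ∈ Finset.range n, F i j
        = ∑ j ∈ Finset.range (2 * ((n + 1) / 2)), F i j := by
      intro i
      apply Finset.sum_subset
      · intro x hx; simp only [Finset.mem_range] at *; omega
      · intro x _ hx
        simp only [Finset.mem_range] at hx
        simp [hF, hx]
    simp_rw [hj]
    apply Finset.sum_subset
    · intro x hx; simp only [Finset.mem_range] at *; omega
    · intro x _ hx
      simp only [Finset.mem_range] at hx
      simp [hF, hx]
  have hp : ∀ i j, padGAP B i j = g + F i j := by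
    intro i j
    simp only [padGAP, hF, ← hg]
    split_ifs <;> ring
  have hM : 1 ≤ (m + 1) / 2 := by omega
  have hN : 1 ≤ (n + 1) / 2 := by omega
  rw [← hg]
  generalize padGAP B = Q at *
  generalize (m + 1) / 2 = M at *
  generalize (n + 1) / 2 = N at *
  have hM0 : (M : ℝ) ≠ 0 := by positivity
  have hN0 : (N : ℝ) ≠ 0 := by positivity
  rw [GAP]
  have hb : ∀ (i : Fin M) (j : Fin N), blockAvg Q i j =
      g + (F (2 * i) (2 * j) + F (2 * i) (2 * j + 1) +
        (F (2 * i + 1) (2 * j) + F (2 * i + 1) (2 * j + 1))) / 4 := by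
    intro i j
    simp only [blockAvg, hp]
    ring
  rw [gapAux_range_two] at h1
  simp_rw [gapAux_range_two, ← Finset.sum_add_distrib, Finset.sum_range] at h1
  simp_rw [hb, Finset.sum_add_distrib, ← Finset.sum_div]
  simp_rw [Finset.sum_add_distrib] at h1 ⊢
  rw [h1]
  simp
  field_simp

theorem gapAux_dim_pos {d : ℕ} (hd : 1 ≤ d) (k : ℕ) : 1 ≤ dimSeq d k := by
  induction k with
  | zero => exact hd
  | succ k ih => simp only [dimSeq]; omega

theorem gapAux_dim_shift (d k : ℕ) : dimSeq d (k + 1) = dimSeq ((d + 1) / 2) k := by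
  induction k with
  | zero => rfl
  | succ k ih => rw [dimSeq, ih]; rfl

theorem gapAux_dim_one (k : ℕ) : ∀ d, 1 ≤ d → d ≤ 2 ^ k → dimSeq d k = 1 := by
  induction k with
  | zero => intro d h1 h2; simp only [dimSeq]; simp at h2; omega
  | succ k ih =>
    intro d h1 h2
    rw [gapAux_dim_shift]
    rw [pow_succ] at h2
    exact ih _ (by omega) (by omega)

theorem gapAux_one {m n : ℕ} (hm : m = 1) (hn : n = 1) (A : Matrix (Fin m) (Fin n) ℝ)
    (i : Fin m) (j : Fin n) : A i j = GAP A := by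
  subst hm hn
  simp [GAP, Subsingleton.elim i 0, Subsingleton.elim j 0]

theorem seqTP_GAP_invariant_and_terminal (H W : ℕ) (hH : 1 ≤ H) (hW : 1 ≤ W)
    (X : Matrix (Fin H) (Fin W) ℝ) :
    (∀ k : ℕ, GAP (seqTP X k) = GAP X) ∧
    (∀ k : ℕ, Nat.clog 2 (max H W) ≤ k →
      dimSeq H k = 1 ∧ dimSeq W k = 1 ∧ ∀ i j, seqTP X k i j = GAP X) := by
  have hinv : ∀ k : ℕ, GAP (seqTP X k) = GAP X := by
    intro k
    induction k with
    | zero => rfl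
    | succ k ih =>
      rw [← ih]
      exact gapAux_step (gapAux_dim_pos hH k) (gapAux_dim_pos hW k) (seqTP X k)
  refine ⟨hinv, fun k hk => ?_⟩
  have hle : max H W ≤ 2 ^ k := (Nat.clog_le_iff_le_pow (by norm_num)).1 hk
  have h1 := gapAux_dim_one k H hH ((le_max_left _ _).trans hle)
  have h2 := gapAux_dim_one k W hW ((le_max_right _ _).trans hle)
  refine ⟨h1, h2, fun i j => ?_⟩
  rw [gapAux_one h1 h2 (seqTP X k) i j, hinv]
end
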